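/- Let A and B be states with |A| = |B| + 2. Then there exist distinct points p, q ∈ A \ B such that c(A, B ∪ {p, q}) ≤ c(A, B) − d(p, q), where c denotes the transition distance. -/

import Mathlib

/-!
Every transition toggles membership of two points. In a transition path from `B` to `A`, the
transitions touching a fixed point alternately add and remove it. Pairing them off in consecutive
couples, starting from the end at `A`, leaves exactly one transition unpaired at each point of
`B ∆ A` and none elsewhere. The pairing therefore splits the transitions into closed trails and
trails whose end points match up the points of `B ∆ A`. Deleting any collection of these trails
leaves a legal path, which now starts at `B` with the end points of the deleted trails toggled; by
the triangle inequality the saving is at least the sum of the distances between matched end points.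
Since `|A \ B| = |B \ A| + 2`, some trail has both end points in `A \ B`.

`Deletable M` records such a matching `M` together with the possibility of deleting any of its
trails, and `exists_matching` constructs `M` by induction on the path: prefixing a transition `p, q`
creates the trail `pq`, or extends a trail, or joins two trails, or closes one. Joining two trails
is the reason for keeping track of simultaneous deletions. Paths are reversible (`Reach.symm`), so
the conclusion can be read off for paths from `A` to `B`. As costs are defined by an infimum, the
pair found depends on the path; finiteness of `A` makes the choice uniform.
-/

variable {X : Type*} [MetricSpace X] [DecidableEq X]

/-- A transition path within ground set `R` from state `A` to state `B`,
recorded by the list of pairs that are added or removed, one per transition. -/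
inductive TPath (R : Finset X) : Finset X → Finset X → List (X × X) → Prop
  | nil (A : Finset X) : TPath R A A []
  | add {A B : Finset X} {l : List (X × X)} (p q : X) (hpq : p ≠ q)
      (hp : p ∈ R) (hq : q ∈ R) (hpA : p ∉ A) (hqA : q ∉ A)
      (h : TPath R (insert p (insert q A)) B l) : TPath R A B ((p, q) :: l)
  | remove {A B : Finset X} {l : List (X × X)} (p q : X) (hpq : p ≠ q)
      (hpA : p ∈ A) (hqA : q ∈ A)
      (h : TPath R (A \ {p, q}) B l) : TPath R A B ((p, q) :: l)

/-- The cost of a transition path: the sum of the distances `d(p, q)` over the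
pairs added or removed along the path. -/
noncomputable def pathCost (l : List (X × X)) : ℝ := (l.map fun m => dist m.1 m.2).sum

/-- The transition distance `c(A, B)`: the minimum (infimum) cost of a
transition path from `A` to `B` within ground set `R`. -/
noncomputable def tdist (R A B : Finset X) : ℝ :=
  sInf {c : ℝ | ∃ l : List (X × X), TPath R A B l ∧ pathCost l = c}

set_option linter.unusedSectionVars false

open scoped symmDiff

/-- There is a transition path from `A` to `B` of cost at most `c`. -/
def Reach (R A B : Finset X) (c : ℝ) : Prop := ∃ l, TPath R A B l ∧ pathCost l ≤ c

lemma pathCost_cons (p q : X) (l : List (X × X)) :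
    pathCost ((p, q) :: l) = dist p q + pathCost l := by
  simp [pathCost]

lemma pathCost_nonneg (l : List (X × X)) : 0 ≤ pathCost l := by
  induction l with
  | nil => simp [pathCost]
  | cons m l ih => obtain ⟨p, q⟩ := m; rw [pathCost_cons]; positivity

lemma Reach.refl (R A : Finset X) : Reach R A A 0 := ⟨[], .nil A, by simp [pathCost]⟩

lemma Reach.mono {R A B : Finset X} {c c' : ℝ} (h : Reach R A B c) (hc : c ≤ c') :
    Reach R A B c' := by
  obtain ⟨l, hl, h⟩ := h
  exact ⟨l, hl, h.trans hc⟩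

lemma Reach.trans {R A B C : Finset X} {c c' : ℝ} (h : Reach R A B c) (h' : Reach R B C c') :
    Reach R A C (c + c') := by
  obtain ⟨l, hl, hc⟩ := h
  refine Reach.mono (c := pathCost l + c') ?_ (by linarith)
  clear hc
  induction hl with
  | nil A => exact h'.mono (by simp [pathCost])
  | add p q hpq hp hq hpA hqA _ ih =>
    obtain ⟨l', hl', h⟩ := ih h'
    exact ⟨_, .add p q hpq hp hq hpA hqA hl', by simp only [pathCost_cons]; linarith⟩
  | remove p q hpq hpA hqA _ ih =>
    obtain ⟨l', hl', h⟩ := ih h'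
    exact ⟨_, .remove p q hpq hpA hqA hl', by simp only [pathCost_cons]; linarith⟩

lemma symmDiff_pair_of_notMem {A : Finset X} {p q : X} (hp : p ∉ A) (hq : q ∉ A) :
    A ∆ {p, q} = insert p (insert q A) := by
  ext x; simp only [Finset.mem_symmDiff, Finset.mem_insert, Finset.mem_singleton]; grind

lemma symmDiff_pair_of_mem {A : Finset X} {p q : X} (hp : p ∈ A) (hq : q ∈ A) :
    A ∆ {p, q} = A \ {p, q} := by
  ext x; simp only [Finset.mem_symmDiff, Finset.mem_insert, Finset.mem_singleton,
    Finset.mem_sdiff]; grind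

/-- Two points of `R` with the same membership status in `A` can be toggled in one transition. -/
lemma Reach.toggle {R A : Finset X} {p q : X} (hpq : p ≠ q) (hp : p ∈ R) (hq : q ∈ R)
    (h : p ∈ A ↔ q ∈ A) : Reach R A (A ∆ {p, q}) (dist p q) := by
  by_cases hpA : p ∈ A
  · rw [symmDiff_pair_of_mem hpA (h.1 hpA)]
    exact ⟨_, .remove p q hpq hpA (h.1 hpA) (.nil _), by simp [pathCost]⟩
  · rw [symmDiff_pair_of_notMem hpA (fun hq => hpA (h.2 hq))]
    exact ⟨_, .add p q hpq hp hq hpA (fun hq => hpA (h.2 hq)) (.nil _), by simp [pathCost]⟩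

lemma Reach.toggle_back {R A : Finset X} {p q : X} (hpq : p ≠ q) (hp : p ∈ R) (hq : q ∈ R)
    (h : p ∈ A ↔ q ∈ A) : Reach R (A ∆ {p, q}) A (dist p q) := by
  have := Reach.toggle (A := A ∆ {p, q}) hpq hp hq (by simp [Finset.mem_symmDiff, h])
  rwa [symmDiff_symmDiff_cancel_right] at this

/-- To prove a property of all pairs of states joined by a path, it suffices to treat the trivial
path and prefixing a transition, written as the toggling of two points. -/
lemma TPath.toggle_induction {R B : Finset X} {P : Finset X → ℝ → Prop} (nil : P B 0)
    (step : ∀ (A : Finset X) (p q : X) (c : ℝ), p ≠ q → p ∈ R → q ∈ R → (p ∈ A ↔ q ∈ A) →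
      P A c → P (A ∆ {p, q}) (c + dist p q))
    {A : Finset X} {l : List (X × X)} (h : TPath R A B l) (hA : A ⊆ R) : P A (pathCost l) := by
  have key : ∀ (A : Finset X) (p q : X) (c : ℝ), p ≠ q → p ∈ R → q ∈ R → (p ∈ A ↔ q ∈ A) →
      P (A ∆ {p, q}) c → P A (c + dist p q) := by
    intro A p q c hpq hp hq h hP
    have := step (A ∆ {p, q}) p q c hpq hp hq (by simp [Finset.mem_symmDiff, h]) hP
    rwa [symmDiff_symmDiff_cancel_right] at this
  induction h with
  | nil A => simpa [pathCost] using nil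
  | add p q hpq hp hq hpA hqA _ ih =>
    rw [pathCost_cons, add_comm]
    refine key _ p q _ hpq hp hq (by simp [hpA, hqA]) ?_
    rw [symmDiff_pair_of_notMem hpA hqA]
    refine ih nil (by grind)
  | remove p q hpq hpA hqA _ ih =>
    rw [pathCost_cons, add_comm]
    refine key _ p q _ hpq (hA hpA) (hA hqA) (by simp [hpA, hqA]) ?_
    rw [symmDiff_pair_of_mem hpA hqA]
    exact ih nil (Finset.sdiff_subset.trans hA)

lemma Reach.symm {R A B : Finset X} {c : ℝ} (h : Reach R A B c) (hA : A ⊆ R) :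
    Reach R B A c := by
  obtain ⟨l, hl, hc⟩ := h
  refine Reach.mono ?_ hc
  exact hl.toggle_induction (P := fun A c => Reach R B A c) (Reach.refl R B)
    (fun A p q c hpq hp hq h hP => hP.trans (Reach.toggle hpq hp hq h)) hA

/-- An even state can be emptied by removing its points two at a time. -/
lemma exists_reach_empty (R : Finset X) (n : ℕ) :
    ∀ A : Finset X, A.card = 2 * n → ∃ c, Reach R A ∅ c := by
  induction n with
  | zero =>
    intro A hA
    obtain rfl : A = ∅ := by simpa using hA
    exact ⟨0, Reach.refl R ∅⟩
  | succ n ih =>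
    intro A hA
    obtain ⟨p, hp, q, hq, hpq⟩ := Finset.one_lt_card.1 (show 1 < A.card by omega)
    have hsub : ({p, q} : Finset X) ⊆ A := by grind
    obtain ⟨c, l, hl, -⟩ := ih (A \ {p, q}) (by
      rw [Finset.card_sdiff_of_subset hsub, Finset.card_pair hpq]; omega)
    exact ⟨_, _, .remove p q hpq hp hq hl, le_rfl⟩

/-- The end points of the pairs in `M`, with multiplicity. -/
def ends (M : List (X × X)) : List X := M.flatMap fun m => [m.1, m.2]

@[simp] lemma ends_nil : ends ([] : List (X × X)) = [] := rfl

@[simp] lemma ends_cons (m : X × X) (M : List (X × X)) :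
    ends (m :: M) = m.1 :: m.2 :: ends M := rfl

/-- For every selection `(x₁, y₁), …, (xₖ, yₖ)` of pairs from the list `M`, the state `A` with all
`xᵢ, yᵢ` toggled can be joined to `B` at cost at most `c - ∑ d(xᵢ, yᵢ)`. -/
def Deletable (R B : Finset X) : List (X × X) → Finset X → ℝ → Prop
  | [], A, c => Reach R A B c
  | m :: M, A, c => Deletable R B M A c ∧ Deletable R B M (A ∆ {m.1, m.2}) (c - dist m.1 m.2)

lemma Deletable.reach {R B : Finset X} {M : List (X × X)} {A : Finset X} {c : ℝ}
    (h : Deletable R B M A c) : Reach R A B c := by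
  induction M with
  | nil => exact h
  | cons m M ih => exact ih h.1

lemma Deletable.mono {R B : Finset X} {M : List (X × X)} {A : Finset X} {c c' : ℝ}
    (h : Deletable R B M A c) (hc : c ≤ c') : Deletable R B M A c' := by
  induction M generalizing A c c' with
  | nil => exact Reach.mono h hc
  | cons m M ih => exact ⟨ih h.1 hc, ih h.2 (by linarith)⟩

lemma Deletable.perm {R B : Finset X} {M N : List (X × X)} (hMN : M.Perm N) {A : Finset X} {c : ℝ}
    (h : Deletable R B M A c) : Deletable R B N A c := by
  induction hMN generalizing A c with
  | nil => exact h
  | cons m _ ih => exact ⟨ih h.1, ih h.2⟩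
  | swap m m' M =>
    obtain ⟨⟨h1, h2⟩, h3, h4⟩ := h
    refine ⟨⟨h1, h3⟩, h2, ?_⟩
    rwa [symmDiff_right_comm, sub_right_comm]
  | trans _ _ ih ih' => exact ih' (ih h)

lemma Deletable.flip {R B : Finset X} {M : List (X × X)} {x y : X} {A : Finset X} {c : ℝ}
    (h : Deletable R B ((x, y) :: M) A c) : Deletable R B ((y, x) :: M) A c := by
  refine ⟨h.1, ?_⟩
  have := h.2
  rwa [dist_comm, Finset.pair_comm] at this

/-- A transition at two points off the trails in `M` can be prefixed whichever trails of `M` are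
deleted. -/
lemma Deletable.toggle {R B : Finset X} {M : List (X × X)} {A : Finset X} {c : ℝ} {p q : X}
    (hpq : p ≠ q) (hp : p ∈ R) (hq : q ∈ R) (hA : p ∈ A ↔ q ∈ A)
    (hpM : p ∉ ends M) (hqM : q ∉ ends M) (h : Deletable R B M A c) :
    Deletable R B M (A ∆ {p, q}) (c + dist p q) := by
  induction M generalizing A c with
  | nil => exact ((Reach.toggle_back hpq hp hq hA).trans h).mono (by linarith)
  | cons m M ih =>
    simp only [ends_cons, List.mem_cons, not_or] at hpM hqM
    refine ⟨ih hA hpM.2.2 hqM.2.2 h.1, ?_⟩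
    have := ih (A := A ∆ {m.1, m.2}) (by simp [Finset.mem_symmDiff, hpM, hqM, hA])
      hpM.2.2 hqM.2.2 h.2
    rw [symmDiff_right_comm]
    exact this.mono (by linarith)

/-- `M` is a perfect matching of the points of `A ∆ B`, and its pairs are the ends of trails that
can be deleted from a path of cost `c` from `A` to `B`. -/
def IsTrailMatching (R B : Finset X) (M : List (X × X)) (A : Finset X) (c : ℝ) : Prop :=
  (ends M).Nodup ∧ (∀ x, x ∈ ends M ↔ x ∈ A ∆ B) ∧ Deletable R B M A c

lemma ends_perm {M N : List (X × X)} (h : M.Perm N) : (ends M).Perm (ends N) :=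
  h.flatMap_right _

lemma IsTrailMatching.perm {R B : Finset X} {M N : List (X × X)} (hMN : M.Perm N)
    {A : Finset X} {c : ℝ} (h : IsTrailMatching R B M A c) : IsTrailMatching R B N A c :=
  ⟨(ends_perm hMN).nodup_iff.1 h.1, fun x => (ends_perm hMN).mem_iff.symm.trans (h.2.1 x),
    h.2.2.perm hMN⟩

lemma exists_perm_of_mem_ends {M : List (X × X)} {p : X} (hp : p ∈ ends M) :
    ∃ y N, M.Perm ((p, y) :: N) ∨ M.Perm ((y, p) :: N) := by
  obtain ⟨⟨a, b⟩, hm, hpm⟩ := List.mem_flatMap.1 hp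
  have hperm := List.perm_cons_erase hm
  simp only [List.mem_cons, List.not_mem_nil, or_false] at hpm
  rcases hpm with rfl | rfl
  · exact ⟨b, _, Or.inl hperm⟩
  · exact ⟨a, _, Or.inr hperm⟩

/-- A matching can be rearranged so that its first pair is the one containing a given point. -/
lemma IsTrailMatching.exists_cons {R B : Finset X} {M : List (X × X)} {A : Finset X} {c : ℝ}
    {p : X} (h : IsTrailMatching R B M A c) (hp : p ∈ ends M) :
    ∃ y N, IsTrailMatching R B ((p, y) :: N) A c ∧ (ends M).Perm (p :: y :: ends N) := by
  obtain ⟨y, N, hM | hM⟩ := exists_perm_of_mem_ends hp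
  · exact ⟨y, N, h.perm hM, ends_perm hM⟩
  · have hs : (ends ((y, p) :: N)).Perm (p :: y :: ends N) := List.Perm.swap _ _ _
    obtain ⟨h1, h2, h3⟩ := h.perm hM
    exact ⟨y, N, ⟨hs.nodup_iff.1 h1, fun x => hs.mem_iff.symm.trans (h2 x), h3.flip⟩,
      (ends_perm hM).trans hs⟩

/-- Prefixing a transition extends a trail when exactly one of its points is the end of one. -/
lemma IsTrailMatching.extend {R B : Finset X} {M : List (X × X)} {A : Finset X} {c : ℝ} {p q : X}
    (hpq : p ≠ q) (hp : p ∈ R) (hq : q ∈ R) (hA : p ∈ A ↔ q ∈ A)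
    (h : IsTrailMatching R B M A c) (hpM : p ∈ ends M) (hqM : q ∉ ends M) :
    ∃ N, IsTrailMatching R B N (A ∆ {p, q}) (c + dist p q) := by
  obtain ⟨y, N, ⟨h1, h2, h3, h4⟩, hperm⟩ := h.exists_cons hpM
  rw [hperm.mem_iff] at hqM
  simp only [ends_cons, List.nodup_cons, List.mem_cons, not_or] at h1 h2 hqM
  refine ⟨(q, y) :: N, ?_, ?_, h3.toggle hpq hp hq hA h1.1.2 hqM.2.2, ?_⟩
  · simp only [ends_cons, List.nodup_cons, List.mem_cons]; tauto
  · intro x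
    have := h2 x
    simp only [ends_cons, List.mem_cons, Finset.mem_symmDiff, Finset.mem_insert,
      Finset.mem_singleton] at this ⊢
    grind
  · have : A ∆ {p, q} ∆ {q, y} = A ∆ {p, y} := by
      ext x
      simp only [Finset.mem_symmDiff, Finset.mem_insert, Finset.mem_singleton]
      grind
    dsimp only at h4 ⊢
    rw [this]
    exact h4.mono (by linarith [dist_triangle q p y, dist_comm p q])

lemma IsTrailMatching.step {R B : Finset X} {M : List (X × X)} {A : Finset X} {c : ℝ} {p q : X}
    (hpq : p ≠ q) (hp : p ∈ R) (hq : q ∈ R) (hA : p ∈ A ↔ q ∈ A)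
    (h : IsTrailMatching R B M A c) :
    ∃ N, IsTrailMatching R B N (A ∆ {p, q}) (c + dist p q) := by
  by_cases hpM : p ∈ ends M
  · by_cases hqM : q ∈ ends M
    · obtain ⟨y, N, h', hperm⟩ := h.exists_cons hpM
      rw [hperm.mem_iff] at hqM
      by_cases hqy : q = y
      · -- The transition joins the two ends of one trail, which becomes closed.
        subst hqy
        obtain ⟨h1, h2, h3, -⟩ := h'
        simp only [ends_cons, List.nodup_cons, List.mem_cons, not_or] at h1 h2
        refine ⟨N, h1.2.2, fun x => ?_, h3.toggle hpq hp hq hA h1.1.2 h1.2.1⟩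
        have := h2 x
        simp only [Finset.mem_symmDiff, Finset.mem_insert, Finset.mem_singleton] at this ⊢
        grind
      · -- The transition joins two trails, leaving their other ends `y` and `z`.
        have hqN : q ∈ ends N := by
          simp only [List.mem_cons] at hqM
          grind
        obtain ⟨z, N', hN | hN⟩ := exists_perm_of_mem_ends hqN
        all_goals
          obtain ⟨h1, h2, ⟨h3, h3'⟩, h4, h5⟩ := h'.perm (hN.cons _)
          simp only [ends_cons, List.nodup_cons, List.mem_cons, not_or] at h1 h2
          refine ⟨(y, z) :: N', ?_, fun x => ?_,
            h3.toggle hpq hp hq hA (by tauto) (by tauto), ?_⟩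
          · simp only [ends_cons, List.nodup_cons, List.mem_cons]; tauto
          · have := h2 x
            simp only [ends_cons, List.mem_cons, Finset.mem_symmDiff, Finset.mem_insert,
              Finset.mem_singleton] at this ⊢
            grind
        · have : A ∆ {p, q} ∆ {y, z} = A ∆ {p, y} ∆ {q, z} := by
            ext x
            simp only [Finset.mem_symmDiff, Finset.mem_insert, Finset.mem_singleton]
            grind
          dsimp only at h5 ⊢
          rw [this]
          exact h5.mono (by
            linarith [dist_triangle4 y p q z, dist_comm y p])
        · have : A ∆ {p, q} ∆ {y, z} = A ∆ {p, y} ∆ {z, q} := by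
            ext x
            simp only [Finset.mem_symmDiff, Finset.mem_insert, Finset.mem_singleton]
            grind
          dsimp only at h5 ⊢
          rw [this]
          exact h5.mono (by
            linarith [dist_triangle4 y p q z, dist_comm y p, dist_comm z q])
    · exact h.extend hpq hp hq hA hpM hqM
  · by_cases hqM : q ∈ ends M
    · have := h.extend hpq.symm hq hp hA.symm hqM hpM
      rwa [Finset.pair_comm, dist_comm] at this
    · -- The transition is a trail of its own.
      obtain ⟨h1, h2, h3⟩ := h
      refine ⟨(p, q) :: M, ?_, fun x => ?_, h3.toggle hpq hp hq hA hpM hqM, ?_⟩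
      · simp only [ends_cons, List.nodup_cons, List.mem_cons]; tauto
      · have := h2 x
        have := h2 p
        have := h2 q
        simp only [ends_cons, List.mem_cons, Finset.mem_symmDiff, Finset.mem_insert,
          Finset.mem_singleton] at *
        grind
      · dsimp only
        rw [symmDiff_symmDiff_cancel_right]
        exact h3.mono (by linarith)

lemma exists_matching {R A B : Finset X} {l : List (X × X)} (h : TPath R A B l) (hA : A ⊆ R) :
    ∃ M, IsTrailMatching R B M A (pathCost l) :=
  h.toggle_induction (P := fun A c => ∃ M, IsTrailMatching R B M A c)
    ⟨[], by simp, by simp, Reach.refl R B⟩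
    (fun _ _ _ _ hpq hp hq h ⟨_, hM⟩ => hM.step hpq hp hq h) hA

/-- If each pair of `M` has at most one end in `S`, then at most half of the ends lie in `S`. -/
lemma countP_ends_le (S : Finset X) (M : List (X × X))
    (h : ∀ m ∈ M, ¬ (m.1 ∈ S ∧ m.2 ∈ S)) :
    (ends M).countP (· ∈ S) ≤ (ends M).countP (· ∉ S) := by
  induction M with
  | nil => simp
  | cons m M ih =>
    have h1 := ih fun m hm => h m (List.mem_cons_of_mem _ hm)
    have h2 := h m List.mem_cons_self
    simp only [ends_cons, List.countP_cons]
    by_cases ha : m.1 ∈ S <;> by_cases hb : m.2 ∈ S <;> simp_all <;> omega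

lemma countP_eq_card {L : List X} (hL : L.Nodup) (p : X → Prop) [DecidablePred p] {S : Finset X}
    (h : ∀ x, x ∈ S ↔ x ∈ L ∧ p x) : L.countP (fun x => p x) = S.card := by
  rw [List.countP_eq_length_filter, ← List.toFinset_card_of_nodup (hL.filter _)]
  congr 1
  ext x
  simp [h]

/-- From any path from `A` to `B`, a trail with both ends in `A \ B` can be deleted. -/
lemma exists_pair_of_path {R A B : Finset X} (hAR : A ⊆ R) (hBR : B ⊆ R)
    (hcard : A.card = B.card + 2) {c : ℝ} (h : Reach R A B c) :
    ∃ p q : X, p ≠ q ∧ p ∈ A \ B ∧ q ∈ A \ B ∧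
      Reach R A (insert p (insert q B)) (c - dist p q) := by
  obtain ⟨l, hl, hc⟩ := h.symm hAR
  obtain ⟨M, hM⟩ := exists_matching hl hBR
  obtain ⟨m, hm, hm1, hm2⟩ : ∃ m ∈ M, m.1 ∈ A \ B ∧ m.2 ∈ A \ B := by
    by_contra! hne
    have hle := countP_ends_le (A \ B) M fun m hm h => hne m hm h.1 h.2
    rw [countP_eq_card hM.1 (· ∈ A \ B) (S := A \ B)
        (by simp only [hM.2.1, Finset.mem_symmDiff, Finset.mem_sdiff]; tauto),
      countP_eq_card hM.1 (· ∉ A \ B) (S := B \ A)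
        (by simp only [hM.2.1, Finset.mem_symmDiff, Finset.mem_sdiff]; tauto)] at hle
    have h1 := Finset.card_sdiff_add_card_inter A B
    have h2 := Finset.card_sdiff_add_card_inter B A
    rw [Finset.inter_comm] at h2
    omega
  obtain ⟨h1, -, -, h3⟩ := hM.perm (List.perm_cons_erase hm)
  simp only [ends_cons, List.nodup_cons, List.mem_cons, not_or] at h1
  refine ⟨m.1, m.2, h1.1.1, hm1, hm2, ?_⟩
  rw [Finset.mem_sdiff] at hm1 hm2
  rw [symmDiff_pair_of_notMem hm1.2 hm2.2] at h3
  refine (h3.reach.symm ?_).mono (by linarith)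
  have := hAR hm1.1
  have := hAR hm2.1
  grind

lemma Reach.tdist_le {R A B : Finset X} {c : ℝ} (h : Reach R A B c) : tdist R A B ≤ c := by
  obtain ⟨l, hl, hc⟩ := h
  have hbdd : BddBelow {c : ℝ | ∃ l, TPath R A B l ∧ pathCost l = c} := by
    refine ⟨0, ?_⟩
    rintro _ ⟨l, -, rfl⟩
    exact pathCost_nonneg l
  exact (csInf_le hbdd ⟨l, hl, rfl⟩).trans hc

/-- **Augmenting a smaller state cheaply.** Let `A` and `B` be states (even
subsets of the finite ground set `R`) with `|A| = |B| + 2`. Then there exist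
distinct points `p, q ∈ A \ B` such that
`c(A, B ∪ {p, q}) ≤ c(A, B) − d(p, q)`. -/
theorem exists_augmenting_pair (R A B : Finset X)
    (hAR : A ⊆ R) (hBR : B ⊆ R) (hA : Even A.card) (hB : Even B.card)
    (hcard : A.card = B.card + 2) :
    ∃ p q : X, p ≠ q ∧ p ∈ A \ B ∧ q ∈ A \ B ∧
      tdist R A (insert p (insert q B)) ≤ tdist R A B - dist p q := by
  by_contra! hne
  -- The infimum defining `tdist R A B` is over a nonempty set.
  have hnonempty : {c : ℝ | ∃ l, TPath R A B l ∧ pathCost l = c}.Nonempty := by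
    obtain ⟨a, ha⟩ := hA.two_dvd
    obtain ⟨b, hb⟩ := hB.two_dvd
    obtain ⟨c, hc⟩ := exists_reach_empty R a A ha
    obtain ⟨c', hc'⟩ := exists_reach_empty R b B hb
    obtain ⟨l, hl, -⟩ := hc.trans (hc'.symm hBR)
    exact ⟨_, l, hl, rfl⟩
  -- Some `ε > 0` bounds below the failure of the inequality at all of the finitely many pairs.
  obtain ⟨ε, hε, hgap⟩ : ∃ ε > 0, ∀ m ∈ ((A \ B) ×ˢ (A \ B)).filter (fun m : X × X => m.1 ≠ m.2),
      ε ≤ tdist R A (insert m.1 (insert m.2 B)) - (tdist R A B - dist m.1 m.2) := by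
    set T := ((A \ B) ×ˢ (A \ B)).filter (fun m : X × X => m.1 ≠ m.2)
    rcases T.eq_empty_or_nonempty with hT | hT
    · exact ⟨1, one_pos, by simp [hT]⟩
    · obtain ⟨m, hm, hmin⟩ := T.exists_min_image
        (fun m => tdist R A (insert m.1 (insert m.2 B)) - (tdist R A B - dist m.1 m.2)) hT
      refine ⟨_, ?_, hmin⟩
      simp only [T, Finset.mem_filter, Finset.mem_product] at hm
      exact sub_pos.2 (hne m.1 m.2 hm.2 hm.1.1 hm.1.2)
  obtain ⟨_, ⟨l, hl, rfl⟩, hlt⟩ := exists_lt_of_csInf_lt hnonempty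
    (show sInf _ < tdist R A B + ε by simpa [tdist] using hε)
  obtain ⟨p, q, hpq, hp, hq, h⟩ := exists_pair_of_path hAR hBR hcard ⟨l, hl, le_rfl⟩
  have h1 := h.tdist_le
  have h2 := hgap (p, q) (by simp only [Finset.mem_filter, Finset.mem_product]; tauto)
  dsimp only at h2
  linarith
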